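/- Fix an integer k ≥ 2 and a constant C > 0. For every ε > 0 there is a constant C_ε such that for every integer N ≥ 1, the number of 6-tuples (n₁, …, n₆) of integers with N ≤ n_i ≤ 2N for all i, satisfying n₁ + n₂ + n₃ = n₄ + n₅ + n₆ and |n₁^k + n₂^k + n₃^k − n₄^k − n₅^k − n₆^k| ≤ C·N^{k-2}, is at most C_ε · N^{3+ε}. -/

import Mathlib

open MeasureTheory Real

noncomputable section

/-!
Put `f x = x ^ k / N ^ (k - 2)`, so that `f''` is bounded above and below on `[N, 2N]` and the near
equation becomes `f(n₁) + f(n₂) + f(n₃) - f(n₄) - f(n₅) - f(n₆) = O(1)`. Replacing `f` by its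
integer part turns this into boundedly many exact equations, and by orthogonality of the characters
of `ZMod M × ZMod M` for large `M` the number of solutions is bounded by the sixth moment of
`∑ e((n x + ⌊f(n)⌋ y) / M)`. It remains to show that this moment has size `N ^ (3 + ε)`.

By a broad-narrow decomposition, either a short block of `n` dominates, which is handled by
induction on scales, or two well-separated blocks `S` and `T` do. Then `∑ |F_S|² |F_T|⁴` is
estimated by bilinear decoupling: if `T` has diameter `r` and lies at distance `d` from `S`, the
curvature of `f` forces the terms `n₁, n₄ ∈ S` of a solution with the other four in `T` to satisfy
`|n₁ - n₄| ≲ r² / d`, so `S` may be cut into blocks of that length at no cost. The Cauchy-Schwarz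
inequality then exchanges the roles of `S` and `T`, and iterating this exchange gains an arbitrarily
small constant over the induction hypothesis.
-/

namespace SixthMoment

open Finset
open scoped ComplexConjugate

section SignedSum

/-- The defect `t₀ + t₁ + t₂ - t₃ - t₄ - t₅` of the additive equation under study. -/
def signedSum {α : Type*} [AddCommGroup α] (t : Fin 6 → α) : α :=
  t 0 + t 1 + t 2 - t 3 - t 4 - t 5

lemma intCast_signedSum {R : Type*} [Ring R] (t : Fin 6 → ℤ) :
    ((signedSum t : ℤ) : R) = signedSum fun i ↦ (t i : R) := by
  simp only [signedSum]
  push_cast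
  rfl

lemma abs_signedSum_le (t : Fin 6 → ℤ) {B : ℤ} (h : ∀ i, 6 * |t i| ≤ B) : |signedSum t| ≤ B := by
  have h₀ := h 0; have h₁ := h 1; have h₂ := h 2
  have h₃ := h 3; have h₄ := h 4; have h₅ := h 5
  grind [signedSum]

lemma abs_signedSum_sub_signedSum_floor_le (u : Fin 6 → ℝ) :
    |signedSum u - (signedSum fun i ↦ ⌊u i⌋ : ℤ)| ≤ 3 := by
  have h_le i := Int.floor_le (u i)
  have h_lt i := Int.lt_floor_add_one (u i)
  rw [intCast_signedSum, abs_le]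
  simp only [signedSum]
  constructor <;>
    linarith [h_le 0, h_le 1, h_le 2, h_le 3, h_le 4, h_le 5,
      h_lt 0, h_lt 1, h_lt 2, h_lt 3, h_lt 4, h_lt 5]

end SignedSum

section Moments

variable {ι Ω : Type*}

/-- The exponential sum `∑_{n ∈ S} χₙ` of a family of complex functions `χₙ`. -/
def expSum (χ : ι → Ω → ℂ) (S : Finset ι) (x : Ω) : ℂ :=
  ∑ n ∈ S, χ n x

/-- The multiplicative counterpart `z₀ z₁ z₂ z̄₃ z̄₄ z̄₅` of `signedSum`. -/
def sixProd (z : Fin 6 → ℂ) : ℂ :=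
  z 0 * z 1 * z 2 * conj (z 3) * conj (z 4) * conj (z 5)

lemma norm_sixProd (z : Fin 6 → ℂ) :
    ‖sixProd z‖ = ‖z 0‖ * ‖z 1‖ * ‖z 2‖ * ‖z 3‖ * ‖z 4‖ * ‖z 5‖ := by
  simp only [sixProd, norm_mul, RCLike.norm_conj]

lemma sixProd_expSum (χ : ι → Ω → ℂ) (S : Fin 6 → Finset ι) (x : Ω) :
    sixProd (fun i ↦ expSum χ (S i) x) =
      ∑ t ∈ Fintype.piFinset S, sixProd fun i ↦ χ (t i) x := by
  have h := prod_univ_sum S fun i n ↦ if i < 3 then χ n x else conj (χ n x)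
  simp only [Fin.prod_univ_six] at h
  simpa [sixProd, expSum, map_sum, Fin.lt_def] using h

variable [Fintype Ω]

/-- The sixth moment of the exponential sum over `S`. -/
def sixthMoment (χ : ι → Ω → ℂ) (S : Finset ι) : ℝ :=
  ∑ x, ‖expSum χ S x‖ ^ 6

/-- The asymmetric bilinear moment, with two factors over `S` and four over `T`. -/
def bilinearMoment (χ : ι → Ω → ℂ) (S T : Finset ι) : ℝ :=
  ∑ x, ‖expSum χ S x‖ ^ 2 * ‖expSum χ T x‖ ^ 4

/-- The polarization of `S ↦ bilinearMoment χ S T`. -/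
def crossMoment (χ : ι → Ω → ℂ) (S S' T : Finset ι) : ℂ :=
  ∑ x, sixProd fun i ↦ expSum χ (![S, T, T, S', T, T] i) x

variable (χ : ι → Ω → ℂ)

lemma sixthMoment_nonneg (S : Finset ι) : 0 ≤ sixthMoment χ S := by
  unfold sixthMoment
  positivity

lemma bilinearMoment_nonneg (S T : Finset ι) : 0 ≤ bilinearMoment χ S T := by
  unfold bilinearMoment
  positivity

lemma sixthMoment_le_card_pow (hχ : ∀ n x, ‖χ n x‖ ≤ 1) (S : Finset ι) :
    sixthMoment χ S ≤ Fintype.card Ω * (#S : ℝ) ^ 6 := by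
  have h_norm x : ‖expSum χ S x‖ ≤ #S := by
    simpa [expSum] using norm_sum_le_of_le S fun n _ ↦ hχ n x
  calc sixthMoment χ S ≤ ∑ _x : Ω, (#S : ℝ) ^ 6 :=
        sum_le_sum fun x _ ↦ by gcongr; exact h_norm x
    _ = Fintype.card Ω * (#S : ℝ) ^ 6 := by simp

lemma bilinearMoment_sq_le (S T : Finset ι) :
    bilinearMoment χ S T ^ 2 ≤ bilinearMoment χ T S * sixthMoment χ T := by
  calc bilinearMoment χ S T ^ 2
      = (∑ x, ‖expSum χ T x‖ * ‖expSum χ S x‖ ^ 2 * ‖expSum χ T x‖ ^ 3) ^ 2 :=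
        congrArg (· ^ 2) (sum_congr rfl fun x _ ↦ by ring)
    _ ≤ (∑ x, (‖expSum χ T x‖ * ‖expSum χ S x‖ ^ 2) ^ 2) * ∑ x, (‖expSum χ T x‖ ^ 3) ^ 2 :=
        sum_mul_sq_le_sq_mul_sq _ _ _
    _ = bilinearMoment χ T S * sixthMoment χ T :=
        congrArg₂ (· * ·) (sum_congr rfl fun x _ ↦ by ring) (sum_congr rfl fun x _ ↦ by ring)

lemma bilinearMoment_le_add (S T : Finset ι) :
    bilinearMoment χ S T ≤ sixthMoment χ S + sixthMoment χ T := by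
  simp only [bilinearMoment, sixthMoment, ← sum_add_distrib]
  refine sum_le_sum fun x _ ↦ ?_
  set u := ‖expSum χ S x‖
  set v := ‖expSum χ T x‖
  rcases le_total u v with h | h
  · calc u ^ 2 * v ^ 4 ≤ v ^ 2 * v ^ 4 := by gcongr
      _ ≤ u ^ 6 + v ^ 6 := by rw [← pow_add]; exact le_add_of_nonneg_left (by positivity)
  · calc u ^ 2 * v ^ 4 ≤ u ^ 2 * u ^ 4 := by gcongr
      _ ≤ u ^ 6 + v ^ 6 := by rw [← pow_add]; exact le_add_of_nonneg_right (by positivity)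

lemma crossMoment_self (S T : Finset ι) : crossMoment χ S S T = bilinearMoment χ S T := by
  simp only [crossMoment, bilinearMoment, Complex.ofReal_sum]
  refine sum_congr rfl fun x _ ↦ ?_
  set u := expSum χ S x
  set v := expSum χ T x
  change u * v * v * conj u * conj v * conj v = ((‖u‖ ^ 2 * ‖v‖ ^ 4 : ℝ) : ℂ)
  calc u * v * v * conj u * conj v * conj v = (u * conj u) * (v * conj v) ^ 2 := by ring
    _ = ((‖u‖ ^ 2 * ‖v‖ ^ 4 : ℝ) : ℂ) := by
      rw [Complex.mul_conj', Complex.mul_conj']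
      push_cast
      ring

lemma norm_crossMoment_le (S S' T : Finset ι) :
    ‖crossMoment χ S S' T‖ ≤ (bilinearMoment χ S T + bilinearMoment χ S' T) / 2 := by
  refine (norm_sum_le _ _).trans ?_
  simp only [bilinearMoment, ← sum_add_distrib, sum_div]
  refine sum_le_sum fun x _ ↦ ?_
  rw [norm_sixProd]
  set u := ‖expSum χ S x‖
  set u' := ‖expSum χ S' x‖
  set v := ‖expSum χ T x‖
  change u * v * v * u' * v * v ≤ (u ^ 2 * v ^ 4 + u' ^ 2 * v ^ 4) / 2
  linarith [mul_nonneg (pow_nonneg (norm_nonneg (expSum χ T x)) 4) (sq_nonneg (u - u'))]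

lemma crossMoment_eq_sum (S S' T : Finset ι) :
    crossMoment χ S S' T =
      ∑ t ∈ Fintype.piFinset ![S, T, T, S', T, T], ∑ x, sixProd fun i ↦ χ (t i) x := by
  simp only [crossMoment, sixProd_expSum]
  exact sum_comm

lemma crossMoment_eq_sum_sum {κ κ' : Type*} {S S' T : Finset ι} {J : Finset κ} {J' : Finset κ'}
    {P : κ → Finset ι} {P' : κ' → Finset ι} (hS : ∀ x, expSum χ S x = ∑ i ∈ J, expSum χ (P i) x)
    (hS' : ∀ x, expSum χ S' x = ∑ j ∈ J', expSum χ (P' j) x) :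
    crossMoment χ S S' T = ∑ i ∈ J, ∑ j ∈ J', crossMoment χ (P i) (P' j) T := by
  have h_pointwise x : sixProd (fun i ↦ expSum χ (![S, T, T, S', T, T] i) x) =
      ∑ i ∈ J, ∑ j ∈ J', sixProd fun k ↦ expSum χ (![P i, T, T, P' j, T, T] k) x := by
    set v := expSum χ T x
    change expSum χ S x * v * v * conj (expSum χ S' x) * conj v * conj v =
      ∑ i ∈ J, ∑ j ∈ J', expSum χ (P i) x * v * v * conj (expSum χ (P' j) x) * conj v * conj v
    simp only [hS, hS', map_sum, sum_mul, mul_sum]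
    exact sum_comm
  simp only [crossMoment, h_pointwise]
  rw [sum_comm]
  exact sum_congr rfl fun i _ ↦ sum_comm

end Moments

section Blocks

lemma dist_le_diam_of_mem_finset {α : Type*} [PseudoMetricSpace α] {S : Finset α} {a b : α}
    (ha : a ∈ S) (hb : b ∈ S) : dist a b ≤ Metric.diam (S : Set α) :=
  Metric.dist_le_diam_of_mem S.finite_toSet.isBounded ha hb

lemma card_le_diam_add_one (S : Finset ℤ) : (#S : ℝ) ≤ Metric.diam (S : Set ℤ) + 1 := by
  rcases S.eq_empty_or_nonempty with rfl | hS
  · simp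
  have h_min_le_max := S.min'_le_max' hS
  have h_card : (#S : ℤ) ≤ S.max' hS + 1 - S.min' hS := by
    have h_subset : S ⊆ Icc (S.min' hS) (S.max' hS) :=
      fun n hn ↦ mem_Icc.2 ⟨S.min'_le n hn, S.le_max' n hn⟩
    have h := card_le_card h_subset
    rw [Int.card_Icc] at h
    omega
  have h_dist := dist_le_diam_of_mem_finset (S.max'_mem hS) (S.min'_mem hS)
  rw [Int.dist_eq] at h_dist
  have h_card' : (#S : ℝ) ≤ S.max' hS + 1 - S.min' hS := by exact_mod_cast h_card
  linarith [le_abs_self ((S.max' hS : ℝ) - S.min' hS)]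

/-- The part of `S` in the `i`-th interval `[i * l, (i + 1) * l)` of length `l`. -/
def block (S : Finset ℤ) (l : ℝ) (i : ℤ) : Finset ℤ :=
  {n ∈ S | ⌊(n : ℝ) / l⌋ = i}

/-- The indices of the nonempty blocks of `S` at scale `l`. -/
def blockIndices (S : Finset ℤ) (l : ℝ) : Finset ℤ :=
  S.image fun n : ℤ ↦ ⌊(n : ℝ) / l⌋

lemma block_subset (S : Finset ℤ) (l : ℝ) (i : ℤ) : block S l i ⊆ S :=
  filter_subset _ _

variable {S : Finset ℤ} {l : ℝ}

lemma mem_Ico_of_mem_block (hl : 0 < l) {i n : ℤ} (hn : n ∈ block S l i) :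
    (n : ℝ) ∈ Set.Ico (i * l) ((i + 1) * l) := by
  have h := Int.floor_eq_iff.1 (mem_filter.1 hn).2
  rwa [le_div_iff₀ hl, div_lt_iff₀ hl] at h

lemma diam_block_le (S : Finset ℤ) (hl : 0 < l) (i : ℤ) :
    Metric.diam (block S l i : Set ℤ) ≤ l := by
  refine Metric.diam_le_of_forall_dist_le hl.le fun a ha b hb ↦ ?_
  have ha' := mem_Ico_of_mem_block hl ha
  have hb' := mem_Ico_of_mem_block hl hb
  rw [Int.dist_eq, abs_le]
  constructor <;> linarith [ha'.1, ha'.2, hb'.1, hb'.2]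

lemma abs_sub_sub_one_mul_lt_dist (hl : 0 < l) {T : Finset ℤ} {i j m n : ℤ}
    (hm : m ∈ block S l i) (hn : n ∈ block T l j) : (|(i : ℝ) - j| - 1) * l < dist m n := by
  have hm' := mem_Ico_of_mem_block hl hm
  have hn' := mem_Ico_of_mem_block hl hn
  rw [Int.dist_eq]
  rcases abs_cases ((i : ℝ) - j) with ⟨h, -⟩ | ⟨h, -⟩ <;> rw [h]
  · exact lt_of_lt_of_le (by linarith [hm'.1, hn'.2]) (le_abs_self _)
  · exact lt_of_lt_of_le (by linarith [hn'.1, hm'.2]) (neg_le_abs _)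

lemma card_blockIndices_le (S : Finset ℤ) (hl : 0 < l) :
    (#(blockIndices S l) : ℝ) ≤ Metric.diam (S : Set ℤ) / l + 2 := by
  have h_diam : Metric.diam (blockIndices S l : Set ℤ) ≤ Metric.diam (S : Set ℤ) / l + 1 := by
    refine Metric.diam_le_of_forall_dist_le (by positivity) fun i hi j hj ↦ ?_
    obtain ⟨m, hm, rfl⟩ := mem_image.1 hi
    obtain ⟨n, hn, rfl⟩ := mem_image.1 hj
    have h := abs_sub_sub_one_mul_lt_dist hl (mem_filter.2 ⟨hm, rfl⟩) (mem_filter.2 ⟨hn, rfl⟩)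
    rw [← lt_div_iff₀ hl] at h
    have h_dist : dist m n / l ≤ Metric.diam (S : Set ℤ) / l := by
      gcongr
      exact dist_le_diam_of_mem_finset hm hn
    rw [Int.dist_eq]
    linarith
  linarith [card_le_diam_add_one (blockIndices S l)]

lemma expSum_eq_sum_block {Ω : Type*} (χ : ℤ → Ω → ℂ) (S : Finset ℤ) (l : ℝ) (x : Ω) :
    expSum χ S x = ∑ i ∈ blockIndices S l, expSum χ (block S l i) x :=
  (sum_fiberwise_of_maps_to (fun _ hn ↦ mem_image_of_mem _ hn) _).symm

end Blocks

section NearAndFar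

lemma card_filter_abs_sub_le (J : Finset ℤ) (i : ℤ) (L : ℕ) :
    #{j ∈ J | |i - j| ≤ L} ≤ 2 * L + 1 := by
  have h_subset : {j ∈ J | |i - j| ≤ L} ⊆ Icc (i - L) (i + L) := fun j hj ↦ by
    have h := abs_le.1 (mem_filter.1 hj).2
    rw [mem_Icc]
    omega
  refine (card_le_card h_subset).trans ?_
  rw [Int.card_Icc]
  omega

lemma sum_near_half_add_le (J : Finset ℤ) (L : ℕ) {b : ℤ → ℝ} (hb : ∀ i ∈ J, 0 ≤ b i) :
    ∑ i ∈ J, ∑ j ∈ J with |i - j| ≤ L, (b i + b j) / 2 ≤ (2 * L + 1) * ∑ i ∈ J, b i := by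
  have h_symm :
      ∑ i ∈ J, ∑ j ∈ J with |i - j| ≤ L, b j = ∑ i ∈ J, ∑ j ∈ J with |i - j| ≤ L, b i := by
    simp only [sum_filter]
    rw [sum_comm]
    simp only [abs_sub_comm]
  calc ∑ i ∈ J, ∑ j ∈ J with |i - j| ≤ L, (b i + b j) / 2
      = ∑ i ∈ J, ∑ j ∈ J with |i - j| ≤ L, b i := by
        simp only [← sum_div, sum_add_distrib]
        rw [h_symm, add_self_div_two]
    _ ≤ ∑ i ∈ J, (2 * L + 1) * b i := by
        refine sum_le_sum fun i hi ↦ ?_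
        rw [sum_const, nsmul_eq_mul]
        exact mul_le_mul_of_nonneg_right (by exact_mod_cast card_filter_abs_sub_le J i L) (hb i hi)
    _ = (2 * L + 1) * ∑ i ∈ J, b i := (mul_sum _ _ _).symm

lemma exists_narrow_or_exists_broad {J : Finset ℤ} (hJ : J.Nonempty) (L : ℕ) {v : ℤ → ℝ}
    (hv : ∀ i ∈ J, 0 ≤ v i) :
    (∃ i ∈ J, ∑ k ∈ J, v k ≤ (4 * L + 2) * v i) ∨
      ∃ i ∈ J, ∃ j ∈ J, L < |i - j| ∧
        ∑ k ∈ J, v k ≤ 2 * #J * v i ∧ ∑ k ∈ J, v k ≤ 2 * #J * v j := by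
  obtain ⟨i, hi, h_max⟩ := J.exists_max_image v hJ
  set U := ∑ k ∈ J, v k
  have : (0 : ℝ) < #J := by exact_mod_cast hJ.card_pos
  by_cases! h_far : ∃ j ∈ J, L < |i - j| ∧ U ≤ 2 * #J * v j
  · obtain ⟨j, hj, hij, hUj⟩ := h_far
    exact .inr ⟨i, hi, j, hj, hij, hUj.trans (by gcongr; exact h_max j hj), hUj⟩
  have h_near_sum : ∑ k ∈ J with |i - k| ≤ L, v k ≤ (2 * L + 1) * v i := by
    have h := sum_le_card_nsmul {k ∈ J | |i - k| ≤ L} v (v i)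
      fun k hk ↦ h_max k (mem_filter.1 hk).1
    rw [nsmul_eq_mul] at h
    exact h.trans <| mul_le_mul_of_nonneg_right
      (by exact_mod_cast card_filter_abs_sub_le J i L) (hv i hi)
  have h_far_sum : ∑ k ∈ J with ¬|i - k| ≤ L, v k ≤ U / 2 := by
    have hU : 0 ≤ U := sum_nonneg hv
    have h := sum_le_card_nsmul {k ∈ J | ¬|i - k| ≤ L} v (U / (2 * #J)) fun k hk ↦ by
      obtain ⟨hkJ, hik⟩ := mem_filter.1 hk
      rw [le_div_iff₀ (by positivity), mul_comm]
      exact (h_far k hkJ (not_le.1 hik)).le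
    rw [nsmul_eq_mul] at h
    calc _ ≤ (#{k ∈ J | ¬|i - k| ≤ L} : ℝ) * (U / (2 * #J)) := h
      _ ≤ #J * (U / (2 * #J)) := by gcongr; exact filter_subset _ _
      _ = U / 2 := by field_simp
  refine .inl ⟨i, hi, ?_⟩
  have h_split : _ = U := sum_filter_add_sum_filter_not J (fun k ↦ |i - k| ≤ L) v
  linarith

lemma pow_six_sum_le_narrow_add_broad (J : Finset ℤ) (L : ℕ) {v : ℤ → ℝ} (hv : ∀ i ∈ J, 0 ≤ v i) :
    (∑ i ∈ J, v i) ^ 6 ≤ (4 * L + 2) ^ 6 * ∑ i ∈ J, v i ^ 6 +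
      (2 * #J) ^ 6 * ∑ i ∈ J, ∑ j ∈ J with L < |i - j|, v i ^ 2 * v j ^ 4 := by
  rcases J.eq_empty_or_nonempty with rfl | hJ
  · simp
  have hU : 0 ≤ ∑ k ∈ J, v k := sum_nonneg hv
  have h_narrow_nonneg : ∀ i ∈ J, 0 ≤ v i ^ 6 := fun i hi ↦ pow_nonneg (hv i hi) 6
  have h_term_nonneg {i} (hi : i ∈ J) : ∀ j ∈ ({j ∈ J | L < |i - j|} : Finset ℤ),
      0 ≤ v i ^ 2 * v j ^ 4 := fun j hj ↦
    mul_nonneg (pow_nonneg (hv i hi) 2) (pow_nonneg (hv j (mem_filter.1 hj).1) 4)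
  have h_broad_nonneg : ∀ i ∈ J, 0 ≤ ∑ j ∈ J with L < |i - j|, v i ^ 2 * v j ^ 4 :=
    fun i hi ↦ sum_nonneg (h_term_nonneg hi)
  rcases exists_narrow_or_exists_broad hJ L hv with ⟨i, hi, h⟩ | ⟨i, hi, j, hj, hij, h_i, h_j⟩
  · calc (∑ k ∈ J, v k) ^ 6 ≤ ((4 * L + 2) * v i) ^ 6 := by gcongr
      _ = (4 * L + 2) ^ 6 * v i ^ 6 := mul_pow _ _ _
      _ ≤ (4 * L + 2) ^ 6 * ∑ i ∈ J, v i ^ 6 := by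
        gcongr
        exact single_le_sum h_narrow_nonneg hi
      _ ≤ _ := le_add_of_nonneg_right (mul_nonneg (by positivity) (sum_nonneg h_broad_nonneg))
  · have h_single : v i ^ 2 * v j ^ 4 ≤ ∑ i ∈ J, ∑ j ∈ J with L < |i - j|, v i ^ 2 * v j ^ 4 :=
      (single_le_sum (h_term_nonneg hi) (mem_filter.2 ⟨hj, hij⟩)).trans
        (single_le_sum h_broad_nonneg hi)
    calc (∑ k ∈ J, v k) ^ 6 = (∑ k ∈ J, v k) ^ 2 * (∑ k ∈ J, v k) ^ 4 := by ring
      _ ≤ (2 * #J * v i) ^ 2 * (2 * #J * v j) ^ 4 := by gcongr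
      _ = (2 * #J) ^ 6 * (v i ^ 2 * v j ^ 4) := by ring
      _ ≤ (2 * #J) ^ 6 * ∑ i ∈ J, ∑ j ∈ J with L < |i - j|, v i ^ 2 * v j ^ 4 := by gcongr
      _ ≤ _ := le_add_of_nonneg_left (mul_nonneg (by positivity) (sum_nonneg h_narrow_nonneg))

end NearAndFar

section BroadNarrow

variable {Ω : Type*} [Fintype Ω]

lemma sixthMoment_le_narrow_add_broad (χ : ℤ → Ω → ℂ) (S : Finset ℤ) (l : ℝ) (L : ℕ) :
    sixthMoment χ S ≤
      (4 * L + 2) ^ 6 * ∑ i ∈ blockIndices S l, sixthMoment χ (block S l i) +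
        (2 * #(blockIndices S l)) ^ 6 * ∑ i ∈ blockIndices S l,
          ∑ j ∈ blockIndices S l with L < |i - j|,
            bilinearMoment χ (block S l i) (block S l j) := by
  set J := blockIndices S l
  have h_pointwise x : ‖expSum χ S x‖ ^ 6 ≤
      (4 * L + 2) ^ 6 * ∑ i ∈ J, ‖expSum χ (block S l i) x‖ ^ 6 +
        (2 * #J) ^ 6 * ∑ i ∈ J, ∑ j ∈ J with L < |i - j|,
          ‖expSum χ (block S l i) x‖ ^ 2 * ‖expSum χ (block S l j) x‖ ^ 4 := by
    refine le_trans ?_ (pow_six_sum_le_narrow_add_broad J L fun i _ ↦ norm_nonneg _)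
    gcongr
    rw [expSum_eq_sum_block χ S l x]
    exact norm_sum_le _ _
  refine (sum_le_sum fun x _ ↦ h_pointwise x).trans_eq ?_
  simp only [sixthMoment, bilinearMoment]
  rw [sum_add_distrib, ← mul_sum, ← mul_sum]
  congr 2
  · exact sum_comm
  · rw [sum_comm]
    exact sum_congr rfl fun i _ ↦ sum_comm

end BroadNarrow

section Transversality

variable {Ω : Type*} [Fintype Ω]

/-- The family `χ` is *transverse* on `I` if the sum of a product of six of its members can only be
nonzero when `dist (t 0) (t 3) ≤ A * r ^ 2 / d`, as soon as `t 1, t 2, t 4, t 5` range over a set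
`T` of diameter at most `r` which has distance at least `d > r` from `t 0` and `t 3`.

For `χ n x = e(n x₁ + n ^ 2 x₂)` this is the transversality of two arcs of the parabola lying above
sets at distance `d`. -/
def IsTransverse (χ : ℤ → Ω → ℂ) (I : Finset ℤ) (A : ℝ) : Prop :=
  ∀ T ⊆ I, ∀ r d : ℝ, 1 ≤ r → r < d → Metric.diam (T : Set ℤ) ≤ r →
    ∀ t ∈ Fintype.piFinset ![I, T, T, I, T, T], (∀ m ∈ T, d ≤ dist (t 0) m ∧ d ≤ dist (t 3) m) →
      ∑ x, sixProd (fun i ↦ χ (t i) x) ≠ 0 → dist (t 0) (t 3) ≤ A * r ^ 2 / d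

variable {χ : ℤ → Ω → ℂ} {I S S' T : Finset ℤ} {A r d l : ℝ}

lemma IsTransverse.crossMoment_eq_zero (h : IsTransverse χ I A) (hS : S ⊆ I) (hS' : S' ⊆ I)
    (hT : T ⊆ I) (hr : 1 ≤ r) (hrd : r < d) (h_diam : Metric.diam (T : Set ℤ) ≤ r)
    (h_sep : ∀ n ∈ S, ∀ m ∈ T, d ≤ dist n m) (h_sep' : ∀ n ∈ S', ∀ m ∈ T, d ≤ dist n m)
    (h_far : ∀ n ∈ S, ∀ n' ∈ S', A * r ^ 2 / d < dist n n') : crossMoment χ S S' T = 0 := by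
  rw [crossMoment_eq_sum]
  refine sum_eq_zero fun t ht ↦ ?_
  have h_mem := Fintype.mem_piFinset.1 ht
  have h₀ : t 0 ∈ S := h_mem 0
  have h₃ : t 3 ∈ S' := h_mem 3
  have h_subset : Fintype.piFinset ![S, T, T, S', T, T] ⊆ Fintype.piFinset ![I, T, T, I, T, T] :=
    Fintype.piFinset_subset _ _ fun i ↦ by fin_cases i <;> simp [hS, hS']
  by_contra h_ne
  exact (h_far _ h₀ _ h₃).not_ge <| h T hT r d hr hrd h_diam t (h_subset ht)
    (fun m hm ↦ ⟨h_sep _ h₀ m hm, h_sep' _ h₃ m hm⟩) h_ne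

lemma IsTransverse.bilinearMoment_le_sum_block (h : IsTransverse χ I A) (hS : S ⊆ I) (hT : T ⊆ I)
    (hr : 1 ≤ r) (hrd : r < d) (h_diam : Metric.diam (T : Set ℤ) ≤ r)
    (h_sep : ∀ n ∈ S, ∀ m ∈ T, d ≤ dist n m) (hl : 0 < l) (hdl : A * r ^ 2 / d ≤ l) :
    bilinearMoment χ S T ≤ 3 * ∑ i ∈ blockIndices S l, bilinearMoment χ (block S l i) T := by
  set J := blockIndices S l
  have h_cross_eq_zero i j (hij : ¬|i - j| ≤ 1) :
      crossMoment χ (block S l i) (block S l j) T = 0 := by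
    refine h.crossMoment_eq_zero ((block_subset _ _ _).trans hS) ((block_subset _ _ _).trans hS)
      hT hr hrd h_diam (fun n hn ↦ h_sep n (block_subset _ _ _ hn))
      (fun n hn ↦ h_sep n (block_subset _ _ _ hn)) fun n hn n' hn' ↦ ?_
    have hij' : (2 : ℝ) ≤ |(i : ℝ) - j| := by
      exact_mod_cast (not_le.1 hij : 2 ≤ |i - j|)
    calc A * r ^ 2 / d ≤ (2 - 1) * l := by linarith
      _ ≤ (|(i : ℝ) - j| - 1) * l := by gcongr
      _ < dist n n' := abs_sub_sub_one_mul_lt_dist hl hn hn'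
  have h_near : crossMoment χ S S T =
      ∑ i ∈ J, ∑ j ∈ J with |i - j| ≤ (1 : ℕ), crossMoment χ (block S l i) (block S l j) T := by
    rw [crossMoment_eq_sum_sum χ (expSum_eq_sum_block χ S l) (expSum_eq_sum_block χ S l)]
    exact sum_congr rfl fun i _ ↦ (sum_filter_of_ne fun j _ h_ne ↦
      not_not.1 (mt (h_cross_eq_zero i j) h_ne)).symm
  calc bilinearMoment χ S T = ‖crossMoment χ S S T‖ := by
        rw [crossMoment_self, Complex.norm_of_nonneg (bilinearMoment_nonneg _ _ _)]
    _ ≤ ∑ i ∈ J, ∑ j ∈ J with |i - j| ≤ (1 : ℕ),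
          (bilinearMoment χ (block S l i) T + bilinearMoment χ (block S l j) T) / 2 := by
        rw [h_near]
        exact norm_sum_le_of_le _ fun i _ ↦ norm_sum_le_of_le _ fun j _ ↦ norm_crossMoment_le ..
    _ ≤ (2 * (1 : ℕ) + 1) * ∑ i ∈ J, bilinearMoment χ (block S l i) T :=
        sum_near_half_add_le J 1 fun i _ ↦ bilinearMoment_nonneg _ _ _
    _ = 3 * ∑ i ∈ J, bilinearMoment χ (block S l i) T := by norm_num

end Transversality

section BilinearIteration

variable {Ω : Type*} [Fintype Ω]

/-- Sixth moments over subsets of `I` of diameter at most `r ∈ [1, X]` are at most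
`C * r ^ (3 + η)`: the induction hypothesis of the induction on scales. -/
def SixthMomentBound (χ : ℤ → Ω → ℂ) (I : Finset ℤ) (η C X : ℝ) : Prop :=
  ∀ S ⊆ I, ∀ r : ℝ, 1 ≤ r → r ≤ X → Metric.diam (S : Set ℤ) ≤ r →
    sixthMoment χ S ≤ C * r ^ (3 + η)

variable {χ : ℤ → Ω → ℂ} {I S T : Finset ℤ} {A C D Q X η : ℝ}

lemma div_rpow_three_add {q : ℝ} (hD : 0 ≤ D) (hq : 0 < q) (η : ℝ) :
    (D / q) ^ (3 + η) = D ^ (3 + η) * q ^ (-η) / q ^ 3 := by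
  rw [div_rpow hD hq.le, rpow_neg hq.le, rpow_add hq, ← rpow_natCast q 3]
  push_cast
  field_simp

lemma SixthMomentBound.le_of_diam_le_div (h : SixthMomentBound χ I η C X) (hS : S ⊆ I) {q : ℝ}
    (hq : 0 < q) (hqD : q ≤ D) (hDX : D / q ≤ X) (h_diam : Metric.diam (S : Set ℤ) ≤ D / q) :
    sixthMoment χ S ≤ C * D ^ (3 + η) * q ^ (-η) / q ^ 3 := by
  have h_le := h S hS (D / q) ((one_le_div hq).2 hqD) hDX h_diam
  rwa [div_rpow_three_add (hq.le.trans hqD) hq, ← mul_div_assoc, ← mul_assoc] at h_le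

lemma SixthMomentBound.bilinearMoment_le (h : SixthMomentBound χ I η C X) (hη : 0 ≤ η) (hC : 0 ≤ C)
    (hDX : D ≤ X) (hQ : 2 ≤ Q) (hQD : Q ^ 2 ≤ D) (hS : S ⊆ I) (hT : T ⊆ I)
    (h_diam_S : Metric.diam (S : Set ℤ) ≤ D / Q) (h_diam_T : Metric.diam (T : Set ℤ) ≤ D / Q ^ 2) :
    bilinearMoment χ S T ≤ 2 * (C * D ^ (3 + η)) / Q ^ 3 := by
  have hD : 0 < D := by nlinarith
  have hQ₀ : 0 < Q := by linarith
  have hQD' : Q ≤ D := by nlinarith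
  have hDX' : D / Q ≤ X := (div_le_self hD.le (by linarith)).trans hDX
  have h_diam_T' : Metric.diam (T : Set ℤ) ≤ D / Q :=
    h_diam_T.trans (by gcongr; exact le_self_pow₀ (by linarith) two_ne_zero)
  calc bilinearMoment χ S T ≤ sixthMoment χ S + sixthMoment χ T := bilinearMoment_le_add χ S T
    _ ≤ C * D ^ (3 + η) * Q ^ (-η) / Q ^ 3 + C * D ^ (3 + η) * Q ^ (-η) / Q ^ 3 :=
      add_le_add (h.le_of_diam_le_div hS hQ₀ hQD' hDX' h_diam_S)
        (h.le_of_diam_le_div hT hQ₀ hQD' hDX' h_diam_T')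
    _ = 2 * (C * D ^ (3 + η)) * Q ^ (-η) / Q ^ 3 := by ring
    _ ≤ 2 * (C * D ^ (3 + η)) * 1 / Q ^ 3 := by
      gcongr
      exact rpow_le_one_of_one_le_of_nonpos (by linarith) (by linarith)
    _ = 2 * (C * D ^ (3 + η)) / Q ^ 3 := by rw [mul_one]

lemma IsTransverse.bilinearMoment_le_of_swap (h : IsTransverse χ I A) (hA : 1 ≤ A) (hS : S ⊆ I)
    (hT : T ⊆ I) (hQ : 2 ≤ Q) (hQD : Q ^ 2 ≤ D) (h_diam_S : Metric.diam (S : Set ℤ) ≤ D / Q)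
    (h_diam_T : Metric.diam (T : Set ℤ) ≤ D / Q ^ 2) (h_sep : ∀ n ∈ S, ∀ m ∈ T, A * D ≤ dist n m)
    {β : ℝ} (hβ : 0 ≤ β)
    (h_swap : ∀ i, bilinearMoment χ T (block S (D / Q ^ 4) i) * sixthMoment χ T ≤ β ^ 2) :
    bilinearMoment χ S T ≤ 9 * Q ^ 3 * β := by
  have hD : 0 < D := by nlinarith
  have hl : 0 < D / Q ^ 4 := by positivity
  have h_diam_lt : D / Q ^ 2 < A * D := by
    calc D / Q ^ 2 < D := div_lt_self hD (by nlinarith)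
      _ ≤ A * D := le_mul_of_one_le_left hD.le hA
  have h_card : (#(blockIndices S (D / Q ^ 4)) : ℝ) ≤ 3 * Q ^ 3 := by
    have h_one_le : (1 : ℝ) ≤ Q ^ 3 := one_le_pow₀ (by linarith)
    have h_ratio : Metric.diam (S : Set ℤ) / (D / Q ^ 4) ≤ Q ^ 3 := by
      rw [div_le_iff₀ hl]
      exact h_diam_S.trans_eq (by field_simp)
    linarith [card_blockIndices_le S hl]
  have h_block i : bilinearMoment χ (block S (D / Q ^ 4) i) T ≤ β :=
    le_of_sq_le_sq ((bilinearMoment_sq_le χ _ T).trans (h_swap i)) hβ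
  calc bilinearMoment χ S T
      ≤ 3 * ∑ i ∈ blockIndices S (D / Q ^ 4), bilinearMoment χ (block S (D / Q ^ 4) i) T :=
        h.bilinearMoment_le_sum_block hS hT ((one_le_div (by positivity)).2 hQD) h_diam_lt h_diam_T
          h_sep hl (le_of_eq (by field_simp))
    _ ≤ 3 * ∑ _i ∈ blockIndices S (D / Q ^ 4), β := by gcongr; exact h_block _
    _ = 3 * (#(blockIndices S (D / Q ^ 4)) * β) := by rw [sum_const, nsmul_eq_mul]
    _ ≤ 3 * (3 * Q ^ 3 * β) := by gcongr
    _ = 9 * Q ^ 3 * β := by ring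

-- Decoupling `S` and swapping the roles of `S` and `T` replaces `Q` by `Q ^ 2`, while the
-- Cauchy-Schwarz inequality takes a square root: the net gain is one factor `Q ^ (-η)`.
lemma IsTransverse.bilinearMoment_le_iterate (h : IsTransverse χ I A) (hA : 1 ≤ A) (hη : 0 ≤ η)
    (hC : 0 ≤ C) (h_bound : SixthMomentBound χ I η C X) (hDX : D ≤ X) (m : ℕ) (hQ : 2 ≤ Q)
    (hQD : Q ^ 2 ^ (m + 1) ≤ D) (hS : S ⊆ I) (hT : T ⊆ I)
    (h_diam_S : Metric.diam (S : Set ℤ) ≤ D / Q) (h_diam_T : Metric.diam (T : Set ℤ) ≤ D / Q ^ 2)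
    (h_sep : ∀ n ∈ S, ∀ n' ∈ T, A * D ≤ dist n n') :
    bilinearMoment χ S T ≤ 81 * (C * D ^ (3 + η)) * (Q ^ (-η)) ^ m / Q ^ 3 := by
  induction m generalizing Q S T with
  | zero =>
    rw [pow_zero, mul_one]
    have hD : 0 ≤ D := (pow_nonneg (by linarith) _).trans hQD
    refine (h_bound.bilinearMoment_le hη hC hDX hQ (by simpa using hQD) hS hT h_diam_S
      h_diam_T).trans ?_
    gcongr
    norm_num
  | succ m ih =>
    have hQ₀ : 0 < Q := by linarith
    have hQ₂D : Q ^ 2 ≤ D :=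
      (pow_le_pow_right₀ (by linarith) (le_self_pow₀ one_le_two (Nat.succ_ne_zero _))).trans hQD
    have hD : 0 < D := by nlinarith
    have h_rpow : (Q ^ 2) ^ (-η) = (Q ^ (-η)) ^ 2 := (rpow_pow_comm hQ₀.le _ _).symm
    have h_swap i : bilinearMoment χ T (block S (D / Q ^ 4) i) * sixthMoment χ T ≤
        (9 * (C * D ^ (3 + η)) * (Q ^ (-η)) ^ (m + 1) / Q ^ 6) ^ 2 := by
      have h_bilinear : bilinearMoment χ T (block S (D / Q ^ 4) i) ≤
          81 * (C * D ^ (3 + η)) * ((Q ^ 2) ^ (-η)) ^ m / (Q ^ 2) ^ 3 :=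
        ih (by nlinarith) (by rwa [← pow_mul, ← pow_succ']) hT ((block_subset _ _ _).trans hS)
          h_diam_T (by rw [← pow_mul]; exact diam_block_le S (by positivity) i)
          fun n hn n' hn' ↦ by rw [dist_comm]; exact h_sep n' (block_subset _ _ _ hn') n hn
      have h_sixth : sixthMoment χ T ≤ C * D ^ (3 + η) * (Q ^ 2) ^ (-η) / (Q ^ 2) ^ 3 :=
        h_bound.le_of_diam_le_div hT (by positivity) hQ₂D
          ((div_le_self hD.le (by nlinarith)).trans hDX) h_diam_T
      refine (mul_le_mul h_bilinear h_sixth (sixthMoment_nonneg χ T) (by positivity)).trans_eq ?_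
      rw [h_rpow]
      ring
    refine (h.bilinearMoment_le_of_swap hA hS hT hQ hQ₂D h_diam_S h_diam_T h_sep (by positivity)
      h_swap).trans_eq ?_
    field_simp
    ring

end BilinearIteration

section InductionOnScales

variable {Ω : Type*} [Fintype Ω] {χ : ℤ → Ω → ℂ} {I S : Finset ℤ} {A C K R X l η : ℝ}

lemma sixthMomentBound_of_norm_le_one (hχ : ∀ n x, ‖χ n x‖ ≤ 1) (hη : 0 ≤ η) :
    SixthMomentBound χ I η ((X + 1) ^ 6 * Fintype.card Ω) X := by
  intro S _ r hr hrX h_diam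
  have h_card : (#S : ℝ) ≤ X + 1 := by linarith [card_le_diam_add_one S]
  calc sixthMoment χ S ≤ Fintype.card Ω * (#S : ℝ) ^ 6 := sixthMoment_le_card_pow χ hχ S
    _ ≤ Fintype.card Ω * (X + 1) ^ 6 := by gcongr
    _ = (X + 1) ^ 6 * Fintype.card Ω := mul_comm _ _
    _ ≤ (X + 1) ^ 6 * Fintype.card Ω * r ^ (3 + η) :=
      le_mul_of_one_le_right (by positivity) (one_le_rpow hr (by linarith))

lemma card_blockIndices_div_le (hR : 0 < R) (hK : 1 ≤ K) (h_diam : Metric.diam (S : Set ℤ) ≤ R) :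
    (#(blockIndices S (R / K)) : ℝ) ≤ 3 * K := by
  have h_ratio : Metric.diam (S : Set ℤ) / (R / K) ≤ K := by
    rw [div_le_iff₀ (by positivity)]
    exact h_diam.trans_eq (by field_simp)
  linarith [card_blockIndices_le S (show 0 < R / K by positivity)]

lemma SixthMomentBound.sum_block_le (h : SixthMomentBound χ I η C X) (hC : 0 ≤ C) (hη : 0 ≤ η)
    (hS : S ⊆ I) (hK : 1 ≤ K) (hKR : K ≤ R) (hRX : R / K ≤ X)
    (h_diam : Metric.diam (S : Set ℤ) ≤ R) :
    ∑ i ∈ blockIndices S (R / K), sixthMoment χ (block S (R / K) i) ≤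
      3 * (C * R ^ (3 + η)) / K ^ 2 := by
  have hR : 0 < R := by linarith
  have h_block i : sixthMoment χ (block S (R / K) i) ≤ C * R ^ (3 + η) / K ^ 3 := by
    calc sixthMoment χ (block S (R / K) i) ≤ C * R ^ (3 + η) * K ^ (-η) / K ^ 3 :=
          h.le_of_diam_le_div ((block_subset _ _ _).trans hS) (by linarith) hKR hRX
            (diam_block_le S (by positivity) i)
      _ ≤ C * R ^ (3 + η) * 1 / K ^ 3 := by
        gcongr
        exact rpow_le_one_of_one_le_of_nonpos hK (by linarith)
      _ = C * R ^ (3 + η) / K ^ 3 := by rw [mul_one]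
  calc ∑ i ∈ blockIndices S (R / K), sixthMoment χ (block S (R / K) i)
      ≤ #(blockIndices S (R / K)) * (C * R ^ (3 + η) / K ^ 3) := by
        rw [← nsmul_eq_mul]
        exact sum_le_card_nsmul _ _ _ fun i _ ↦ h_block i
    _ ≤ 3 * K * (C * R ^ (3 + η) / K ^ 3) := by
        gcongr
        exact card_blockIndices_div_le hR hK h_diam
    _ = 3 * (C * R ^ (3 + η)) / K ^ 2 := by field_simp

lemma IsTransverse.bilinearMoment_block_le (h : IsTransverse χ I A) (hA : 1 ≤ A) (hη : 0 ≤ η)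
    (hC : 0 ≤ C) (h_bound : SixthMomentBound χ I η C X) (hS : S ⊆ I) {L n : ℕ}
    (hL : 4 * A ≤ L) (h_le : 2 ^ 2 ^ (n + 1) ≤ 4 * l) (hlX : 4 * l ≤ X) {i j : ℤ}
    (hij : L < |i - j|) :
    bilinearMoment χ (block S l i) (block S l j) ≤
      81 * (C * (4 * l) ^ (3 + η)) * (2 ^ (-η)) ^ n := by
  have hl : 0 < l := by
    have : (0 : ℝ) < 2 ^ 2 ^ (n + 1) := by positivity
    linarith
  have h_sep : ∀ m ∈ block S l i, ∀ m' ∈ block S l j, A * (4 * l) ≤ dist m m' := by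
    intro m hm m' hm'
    have hij' : (L : ℝ) + 1 ≤ |(i : ℝ) - j| := by exact_mod_cast hij
    calc A * (4 * l) = 4 * A * l := by ring
      _ ≤ (|(i : ℝ) - j| - 1) * l := by gcongr; linarith
      _ ≤ dist m m' := (abs_sub_sub_one_mul_lt_dist hl hm hm').le
  refine (h.bilinearMoment_le_iterate hA hη hC h_bound hlX n le_rfl h_le
    ((block_subset _ _ _).trans hS) ((block_subset _ _ _).trans hS)
    ((diam_block_le S hl i).trans (by linarith)) ((diam_block_le S hl j).trans (by linarith))
    h_sep).trans (div_le_self (by positivity) (by norm_num))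

lemma IsTransverse.sum_bilinearMoment_block_le (h : IsTransverse χ I A) (hA : 1 ≤ A) (hη : 0 ≤ η)
    (hC : 0 ≤ C) (h_bound : SixthMomentBound χ I η C X) (hS : S ⊆ I) {L n : ℕ} (hL : 4 * A ≤ L)
    (hK : 4 ≤ K) (hKR : K * 2 ^ 2 ^ (n + 1) ≤ R) (hRX : 4 * (R / K) ≤ X)
    (h_diam : Metric.diam (S : Set ℤ) ≤ R) :
    ∑ i ∈ blockIndices S (R / K), ∑ j ∈ blockIndices S (R / K) with L < |i - j|,
        bilinearMoment χ (block S (R / K) i) (block S (R / K) j) ≤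
      (3 * K) ^ 2 * (81 * (C * R ^ (3 + η)) * (2 ^ (-η)) ^ n) := by
  have hK₀ : 0 < K := by linarith
  have hR : 0 < R := lt_of_lt_of_le (by positivity) hKR
  have hl : 0 < R / K := by positivity
  have h_scale : 2 ^ 2 ^ (n + 1) ≤ 4 * (R / K) :=
    ((le_div_iff₀' hK₀).2 hKR).trans (le_mul_of_one_le_left hl.le (by norm_num))
  have hlR : R / K ≤ R / 4 := by gcongr
  set J := blockIndices S (R / K)
  have h_pair (i j : ℤ) (hij : L < |i - j|) :
      bilinearMoment χ (block S (R / K) i) (block S (R / K) j) ≤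
        81 * (C * R ^ (3 + η)) * (2 ^ (-η)) ^ n := by
    refine (h.bilinearMoment_block_le hA hη hC h_bound hS hL h_scale hRX hij).trans ?_
    gcongr
    linarith
  calc _ ≤ ∑ _i ∈ J, ∑ _j ∈ J, 81 * (C * R ^ (3 + η)) * (2 ^ (-η)) ^ n :=
        sum_le_sum fun i _ ↦ (sum_le_sum fun j hj ↦ h_pair i j (mem_filter.1 hj).2).trans <|
          sum_le_sum_of_subset_of_nonneg (filter_subset _ _) fun _ _ _ ↦ by positivity
    _ = (#J : ℝ) ^ 2 * (81 * (C * R ^ (3 + η)) * (2 ^ (-η)) ^ n) := by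
        simp only [sum_const, nsmul_eq_mul]
        ring
    _ ≤ _ := by
        gcongr
        exact card_blockIndices_div_le hR (by linarith) h_diam

lemma IsTransverse.sixthMomentBound_two_mul (h : IsTransverse χ I A) (hA : 1 ≤ A) (hη : 0 ≤ η)
    (hC : 0 ≤ C) {L n : ℕ} (hL : 4 * A ≤ L) (hK : 8 ≤ K) (hLK : 6 * (4 * L + 2) ^ 6 ≤ K ^ 2)
    (hn : (6 * K) ^ 6 * (3 * K) ^ 2 * 81 * (2 ^ (-η)) ^ n ≤ 1 / 2)
    (hX : K * 2 ^ 2 ^ (n + 1) ≤ X) (h_bound : SixthMomentBound χ I η C X) :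
    SixthMomentBound χ I η C (2 * X) := by
  intro S hS R hR hRX h_diam
  by_cases! hXR : R ≤ X
  · exact h_bound S hS R hR hXR h_diam
  have hRK : R / K ≤ R / 8 := by gcongr
  have hKX : K ≤ K * 2 ^ 2 ^ (n + 1) :=
    le_mul_of_one_le_right (by linarith) (one_le_pow₀ one_le_two)
  set l := R / K
  set J := blockIndices S l
  have h_card : (#J : ℝ) ≤ 3 * K := card_blockIndices_div_le (by linarith) (by linarith) h_diam
  have h_narrow : ∑ i ∈ J, sixthMoment χ (block S l i) ≤ 3 * (C * R ^ (3 + η)) / K ^ 2 :=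
    h_bound.sum_block_le hC hη hS (by linarith) (by linarith) (by linarith) h_diam
  have h_broad : ∑ i ∈ J, ∑ j ∈ J with L < |i - j|, bilinearMoment χ (block S l i) (block S l j) ≤
      (3 * K) ^ 2 * (81 * (C * R ^ (3 + η)) * (2 ^ (-η)) ^ n) :=
    h.sum_bilinearMoment_block_le hA hη hC h_bound hS hL (by linarith) (by linarith) (by linarith)
      h_diam
  calc sixthMoment χ S
      ≤ (4 * L + 2) ^ 6 * ∑ i ∈ J, sixthMoment χ (block S l i) +
          (2 * #J) ^ 6 * ∑ i ∈ J, ∑ j ∈ J with L < |i - j|,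
            bilinearMoment χ (block S l i) (block S l j) :=
        sixthMoment_le_narrow_add_broad χ S l L
    _ ≤ (4 * L + 2) ^ 6 * (3 * (C * R ^ (3 + η)) / K ^ 2) +
          (2 * (3 * K)) ^ 6 * ((3 * K) ^ 2 * (81 * (C * R ^ (3 + η)) * (2 ^ (-η)) ^ n)) := by
        gcongr
        exact sum_nonneg fun i _ ↦ sum_nonneg fun j _ ↦ bilinearMoment_nonneg _ _ _
    _ = C * R ^ (3 + η) * (6 * (4 * L + 2) ^ 6 / K ^ 2 / 2 +
          (6 * K) ^ 6 * (3 * K) ^ 2 * 81 * (2 ^ (-η)) ^ n) := by ring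
    _ ≤ C * R ^ (3 + η) * (1 / 2 + 1 / 2) := by
        gcongr
        exact div_le_one_of_le₀ hLK (sq_nonneg K)
    _ = C * R ^ (3 + η) := by ring

end InductionOnScales

universe u

theorem exists_forall_sixthMoment_le {A η : ℝ} (hA : 1 ≤ A) (hη : 0 < η) :
    ∃ B > (0 : ℝ), ∀ {Ω : Type u} [Fintype Ω] {χ : ℤ → Ω → ℂ} {I : Finset ℤ},
      IsTransverse χ I A → (∀ n x, ‖χ n x‖ ≤ 1) → ∀ r : ℝ, 1 ≤ r → Metric.diam (I : Set ℤ) ≤ r →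
        sixthMoment χ I ≤ B * Fintype.card Ω * r ^ (3 + η) := by
  obtain ⟨L, hL⟩ := exists_nat_ge (4 * A)
  obtain ⟨K, hLK, hK⟩ : ∃ K : ℝ, 6 * (4 * L + 2 : ℝ) ^ 6 ≤ K ^ 2 ∧ 8 ≤ K :=
    (((Filter.tendsto_pow_atTop two_ne_zero).eventually_ge_atTop _).and
      (Filter.eventually_ge_atTop _)).exists
  obtain ⟨n, hn⟩ : ∃ n : ℕ, (6 * K) ^ 6 * (3 * K) ^ 2 * 81 * (2 ^ (-η)) ^ n ≤ 1 / 2 := by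
    have h_lt_one : (2 : ℝ) ^ (-η) < 1 := rpow_lt_one_of_one_lt_of_neg one_lt_two (neg_lt_zero.2 hη)
    have h_tendsto := (tendsto_pow_atTop_nhds_zero_of_lt_one (by positivity) h_lt_one).const_mul
      ((6 * K) ^ 6 * (3 * K) ^ 2 * 81)
    rw [mul_zero] at h_tendsto
    exact (h_tendsto.eventually_le_const one_half_pos).exists
  set X₀ := K * 2 ^ 2 ^ (n + 1)
  have hX₀ : 0 < X₀ := by positivity
  refine ⟨(X₀ + 1) ^ 6, by positivity, fun {Ω _ χ I} h hχ r hr h_diam ↦ ?_⟩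
  have h_bound (m : ℕ) :
      SixthMomentBound χ I η ((X₀ + 1) ^ 6 * Fintype.card Ω) (2 ^ m * X₀) := by
    induction m with
    | zero => simpa using sixthMomentBound_of_norm_le_one hχ hη.le
    | succ m ih =>
      rw [pow_succ' 2 m, mul_assoc 2]
      exact h.sixthMomentBound_two_mul hA hη.le (by positivity) hL hK hLK hn
        (le_mul_of_one_le_left hX₀.le (one_le_pow₀ one_le_two)) ih
  obtain ⟨m, hm⟩ := pow_unbounded_of_one_lt (r / X₀) one_lt_two
  exact h_bound m I subset_rfl r hr ((div_le_iff₀ hX₀).1 hm.le) h_diam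

section QuadraticLike

lemma exists_mem_uIcc_sub_eq_deriv_mul_sub {f f' : ℝ → ℝ} {s : Set ℝ} (hs : Convex ℝ s)
    (hf : ∀ x ∈ s, HasDerivWithinAt f (f' x) s x) {x y : ℝ} (hx : x ∈ s) (hy : y ∈ s) :
    ∃ ξ ∈ Set.uIcc x y, f x - f y = f' ξ * (x - y) := by
  obtain ⟨ξ, hξ, h⟩ := domain_mvt (fun x hx ↦ (hf x hx).hasFDerivWithinAt) hs hy hx
  rw [segment_eq_uIcc, Set.uIcc_comm] at hξ
  exact ⟨ξ, hξ, by simpa [mul_comm] using h⟩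

/-- On `s`, the function `f` has derivative `f'`, and `f'` does not contract distances and is
`K`-Lipschitz. This is all that is used of the curvature of the graph of `f`. -/
structure IsQuadraticLike (f f' : ℝ → ℝ) (K : ℝ) (s : Set ℝ) : Prop where
  hasDerivWithinAt : ∀ x ∈ s, HasDerivWithinAt f (f' x) s x
  abs_sub_le : ∀ x ∈ s, ∀ y ∈ s, |x - y| ≤ |f' x - f' y|
  abs_deriv_sub_le : ∀ x ∈ s, ∀ y ∈ s, |f' x - f' y| ≤ K * |x - y|

variable {f f' : ℝ → ℝ} {K : ℝ} {s : Set ℝ}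

lemma IsQuadraticLike.of_second_deriv_mem_Icc {f'' : ℝ → ℝ} (hs : Convex ℝ s)
    (hf : ∀ x ∈ s, HasDerivWithinAt f (f' x) s x)
    (hf' : ∀ x ∈ s, HasDerivWithinAt f' (f'' x) s x) (h_mem : ∀ x ∈ s, f'' x ∈ Set.Icc 1 K) :
    IsQuadraticLike f f' K s := by
  have h_mvt {x y} (hx : x ∈ s) (hy : y ∈ s) :
      ∃ c ∈ Set.Icc 1 K, |f' x - f' y| = c * |x - y| := by
    obtain ⟨ξ, hξ, h⟩ := exists_mem_uIcc_sub_eq_deriv_mul_sub hs hf' hx hy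
    have hc := h_mem ξ (hs.ordConnected.uIcc_subset hx hy hξ)
    exact ⟨f'' ξ, hc, by rw [h, abs_mul, abs_of_nonneg (zero_le_one.trans hc.1)]⟩
  refine ⟨hf, fun x hx y hy ↦ ?_, fun x hx y hy ↦ ?_⟩ <;>
    obtain ⟨c, hc, h⟩ := h_mvt hx hy <;> rw [h]
  · exact le_mul_of_one_le_left (abs_nonneg _) hc.1
  · exact mul_le_mul_of_nonneg_right hc.2 (abs_nonneg _)

lemma IsQuadraticLike.pow_div_pow (j : ℕ) {N : ℝ} (hN : 0 < N) :
    IsQuadraticLike (fun x ↦ x ^ (j + 2) / N ^ j) (fun x ↦ (j + 2) * x ^ (j + 1) / N ^ j)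
      ((j + 2) * (j + 1) * 2 ^ j) (Set.Icc N (2 * N)) := by
  refine .of_second_deriv_mem_Icc (f'' := fun x ↦ (j + 2) * (j + 1) * (x / N) ^ j)
    (convex_Icc _ _) (fun x _ ↦ ?_) (fun x _ ↦ ?_) fun x hx ↦ ⟨?_, ?_⟩
  · refine ((hasDerivAt_pow (j + 2) x).div_const (N ^ j)).hasDerivWithinAt.congr_deriv ?_
    push_cast
    rfl
  · refine (((hasDerivAt_pow (j + 1) x).const_mul (j + 2 : ℝ)).div_const
      (N ^ j)).hasDerivWithinAt.congr_deriv ?_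
    rw [div_pow, Nat.add_sub_cancel]
    push_cast
    ring
  · have : (0 : ℝ) ≤ j := j.cast_nonneg
    exact one_le_mul_of_one_le_of_one_le (by nlinarith)
      (one_le_pow₀ ((one_le_div hN).2 hx.1))
  · have : 0 ≤ x / N := div_nonneg (hN.le.trans hx.1) hN.le
    gcongr
    exact (div_le_iff₀ hN).2 hx.2

lemma IsQuadraticLike.abs_sub_sub_deriv_mul_le (h : IsQuadraticLike f f' K s) (hs : Convex ℝ s)
    (hK : 0 ≤ K) {x m r : ℝ} (hx : x ∈ s) (hm : m ∈ s) (hr : |x - m| ≤ r) :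
    |f x - f m - f' m * (x - m)| ≤ K * r ^ 2 := by
  obtain ⟨ξ, hξ, h_mvt⟩ := exists_mem_uIcc_sub_eq_deriv_mul_sub hs h.hasDerivWithinAt hx hm
  have hξs := hs.ordConnected.uIcc_subset hx hm hξ
  calc |f x - f m - f' m * (x - m)| = |f' ξ - f' m| * |x - m| := by
        rw [h_mvt, ← sub_mul, abs_mul]
    _ ≤ K * |ξ - m| * |x - m| := by
        gcongr
        exact h.abs_deriv_sub_le ξ hξs m hm
    _ ≤ K * r * r := by
        have h_near : |ξ - m| ≤ |x - m| := by
          simpa only [abs_sub_comm] using Set.abs_sub_right_of_mem_uIcc hξ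
        have : 0 ≤ r := (abs_nonneg _).trans hr
        gcongr
        exact h_near.trans hr
    _ = K * r ^ 2 := by ring

lemma le_abs_sub_of_mem_uIcc {x y ξ m d : ℝ} (hξ : ξ ∈ Set.uIcc x y) (hxy : |x - y| < 2 * d)
    (hx : d ≤ |x - m|) (hy : d ≤ |y - m|) : d ≤ |ξ - m| := by
  rw [Set.mem_uIcc] at hξ
  grind

lemma IsQuadraticLike.mul_abs_sub_le (h : IsQuadraticLike f f' K s) (hs : Convex ℝ s)
    {x y m d : ℝ} (hx : x ∈ s) (hy : y ∈ s) (hm : m ∈ s) (hxy : |x - y| < 2 * d)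
    (hxm : d ≤ |x - m|) (hym : d ≤ |y - m|) :
    d * |x - y| ≤ |f x - f y - f' m * (x - y)| := by
  obtain ⟨ξ, hξ, h_mvt⟩ := exists_mem_uIcc_sub_eq_deriv_mul_sub hs h.hasDerivWithinAt hx hy
  calc d * |x - y| ≤ |f' ξ - f' m| * |x - y| := by
        gcongr
        exact (le_abs_sub_of_mem_uIcc hξ hxy hxm hym).trans
          (h.abs_sub_le ξ (hs.ordConnected.uIcc_subset hx hy hξ) m hm)
    _ = |f x - f y - f' m * (x - y)| := by rw [h_mvt, ← sub_mul, abs_mul]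

lemma IsQuadraticLike.mul_abs_sub_le_of_signedSum_eq_zero (h : IsQuadraticLike f f' K s)
    (hs : Convex ℝ s) (hK : 0 ≤ K) {u : Fin 6 → ℝ} (hu : ∀ i, u i ∈ s) {r d : ℝ} (hrd : r < d)
    (h₂₁ : |u 2 - u 1| ≤ r) (h₄₁ : |u 4 - u 1| ≤ r) (h₅₁ : |u 5 - u 1| ≤ r)
    (h₅₂ : |u 5 - u 2| ≤ r) (h₀ : d ≤ |u 0 - u 1|) (h₃ : d ≤ |u 3 - u 1|)
    (h_sum : signedSum u = 0) :
    d * |u 0 - u 3| ≤ |signedSum fun i ↦ f (u i)| + 3 * K * r ^ 2 := by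
  have h_sub : u 0 - u 3 = (u 4 - u 1) + (u 5 - u 2) := by
    rw [signedSum] at h_sum
    linarith
  have h_close : |u 0 - u 3| < 2 * d := by
    rw [h_sub]
    linarith [abs_add_le (u 4 - u 1) (u 5 - u 2)]
  set ρ : ℝ → ℝ := fun x ↦ f x - f (u 1) - f' (u 1) * (x - u 1) with hρ
  have hρ_le {i} (hi : |u i - u 1| ≤ r) : |ρ (u i)| ≤ K * r ^ 2 :=
    h.abs_sub_sub_deriv_mul_le hs hK (hu i) (hu 1) hi
  have h_eq : f (u 0) - f (u 3) - f' (u 1) * (u 0 - u 3) =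
      (signedSum fun i ↦ f (u i)) - ρ (u 2) + ρ (u 4) + ρ (u 5) := by
    simp only [hρ, signedSum]
    linear_combination -f' (u 1) * h_sub
  calc d * |u 0 - u 3| ≤ |f (u 0) - f (u 3) - f' (u 1) * (u 0 - u 3)| :=
        h.mul_abs_sub_le hs (hu 0) (hu 3) (hu 1) h_close h₀ h₃
    _ ≤ |signedSum fun i ↦ f (u i)| + |ρ (u 2)| + |ρ (u 4)| + |ρ (u 5)| := by
        rw [h_eq]
        exact (abs_add_le _ _).trans <| add_le_add_left ((abs_add_le _ _).trans <|
          add_le_add_left (abs_sub _ _) _) _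
    _ ≤ |signedSum fun i ↦ f (u i)| + 3 * K * r ^ 2 := by
        linarith [hρ_le h₂₁, hρ_le h₄₁, hρ_le h₅₁]

end QuadraticLike

section Characters

variable {M : ℕ} [NeZero M]

/-- The character of frequency `(a, b)` of the discrete torus `ZMod M × ZMod M`. -/
def torusChar (M : ℕ) [NeZero M] (a b : ℤ) (x : ZMod M × ZMod M) : ℂ :=
  ZMod.stdAddChar (x.1 * (a : ZMod M) + x.2 * (b : ZMod M))

lemma norm_torusChar (a b : ℤ) (x : ZMod M × ZMod M) : ‖torusChar M a b x‖ = 1 :=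
  AddChar.norm_apply _ _

lemma torusChar_mul_torusChar (a b a' b' : ℤ) (x : ZMod M × ZMod M) :
    torusChar M a b x * torusChar M a' b' x = torusChar M (a + a') (b + b') x := by
  simp only [torusChar, ← AddChar.map_add_eq_mul]
  congr 1
  push_cast
  ring

lemma sixProd_torusChar (a b : Fin 6 → ℤ) (x : ZMod M × ZMod M) :
    sixProd (fun i ↦ torusChar M (a i) (b i) x) = torusChar M (signedSum a) (signedSum b) x := by
  simp only [sixProd, torusChar, signedSum, ← AddChar.map_neg_eq_conj, ← AddChar.map_add_eq_mul]
  congr 1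
  push_cast
  ring

lemma sum_torusChar {a b : ℤ} (ha : |a| < M) (hb : |b| < M) :
    ∑ x, torusChar M a b x =
      if a = 0 ∧ b = 0 then (Fintype.card (ZMod M × ZMod M) : ℂ) else 0 := by
  have h_cast {c : ℤ} (hc : |c| < M) : (c : ZMod M) = 0 ↔ c = 0 := by
    rw [ZMod.intCast_zmod_eq_zero_iff_dvd]
    exact ⟨fun h ↦ Int.eq_zero_of_abs_lt_dvd h hc, fun h ↦ h ▸ dvd_zero _⟩
  simp only [torusChar, Fintype.sum_prod_type, AddChar.map_add_eq_mul]
  rw [← sum_mul_sum, AddChar.sum_mulShift _ (ZMod.isPrimitive_stdAddChar M),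
    AddChar.sum_mulShift _ (ZMod.isPrimitive_stdAddChar M)]
  simp only [h_cast ha, h_cast hb]
  by_cases h₁ : a = 0 <;> by_cases h₂ : b = 0 <;> simp [h₁, h₂]

/-- The characters with frequencies on the graph of `g`. -/
def graphChar (M : ℕ) [NeZero M] (g : ℤ → ℤ) (n : ℤ) : ZMod M × ZMod M → ℂ :=
  torusChar M n (g n)

variable {g : ℤ → ℤ} {I : Finset ℤ}

lemma sum_sixProd_graphChar_mul_torusChar {b : ℤ} (hI : ∀ n ∈ I, 6 * |n| < M)
    (hg : ∀ n ∈ I, 6 * |g n| + |b| < M) {t : Fin 6 → ℤ} (ht : ∀ i, t i ∈ I) :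
    ∑ x, sixProd (fun i ↦ graphChar M g (t i) x) * torusChar M 0 (-b) x =
      if signedSum t = 0 ∧ (signedSum fun i ↦ g (t i)) = b then
        (Fintype.card (ZMod M × ZMod M) : ℂ) else 0 := by
  have h_lt : |signedSum t| < M :=
    Int.lt_of_le_sub_one (abs_signedSum_le t fun i ↦ Int.le_sub_one_of_lt (hI _ (ht i)))
  have h_lt' : |(signedSum fun i ↦ g (t i)) + -b| < M := by
    have h_le : |signedSum fun i ↦ g (t i)| ≤ M - 1 - |b| :=
      abs_signedSum_le _ fun i ↦ by linarith [Int.le_sub_one_of_lt (hg _ (ht i))]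
    linarith [abs_add_le (signedSum fun i ↦ g (t i)) (-b), abs_neg b]
  simp only [graphChar, sixProd_torusChar, torusChar_mul_torusChar, add_zero]
  rw [sum_torusChar h_lt h_lt']
  simp only [add_neg_eq_zero]

lemma signedSum_eq_zero_of_sum_sixProd_graphChar_ne_zero (hI : ∀ n ∈ I, 6 * |n| < M)
    (hg : ∀ n ∈ I, 6 * |g n| < M) {t : Fin 6 → ℤ} (ht : ∀ i, t i ∈ I)
    (h : ∑ x, sixProd (fun i ↦ graphChar M g (t i) x) ≠ 0) :
    signedSum t = 0 ∧ (signedSum fun i ↦ g (t i)) = 0 := by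
  by_contra h_not
  have h_sum := sum_sixProd_graphChar_mul_torusChar (b := 0) hI (by simpa using hg) ht
  rw [if_neg h_not] at h_sum
  exact h (by simpa [torusChar] using h_sum)

lemma card_filter_signedSum_eq_mul_card_le {b : ℤ} (hI : ∀ n ∈ I, 6 * |n| < M)
    (hg : ∀ n ∈ I, 6 * |g n| + |b| < M) :
    (#{t ∈ Fintype.piFinset fun _ : Fin 6 ↦ I |
        signedSum t = 0 ∧ (signedSum fun i ↦ g (t i)) = b} : ℝ) *
      Fintype.card (ZMod M × ZMod M) ≤ sixthMoment (graphChar M g) I := by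
  have h_count : ∑ x, sixProd (fun _ ↦ expSum (graphChar M g) I x) * torusChar M 0 (-b) x =
      #{t ∈ Fintype.piFinset fun _ : Fin 6 ↦ I |
        signedSum t = 0 ∧ (signedSum fun i ↦ g (t i)) = b} *
        (Fintype.card (ZMod M × ZMod M) : ℂ) := by
    simp only [sixProd_expSum _ fun _ ↦ I, sum_mul]
    rw [sum_comm, sum_congr rfl fun t ht ↦
      sum_sixProd_graphChar_mul_torusChar hI hg (Fintype.mem_piFinset.1 ht), ← sum_filter,
      sum_const, nsmul_eq_mul]
  calc _ = ‖∑ x, sixProd (fun _ ↦ expSum (graphChar M g) I x) * torusChar M 0 (-b) x‖ := by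
        rw [h_count, norm_mul, Complex.norm_natCast, Complex.norm_natCast]
    _ ≤ sixthMoment (graphChar M g) I := norm_sum_le_of_le _ fun x _ ↦ by
        rw [norm_mul, norm_torusChar, norm_sixProd]
        exact le_of_eq (by ring)

lemma isTransverse_graphChar_floor {f f' : ℝ → ℝ} {K : ℝ} {s : Set ℝ}
    (h : IsQuadraticLike f f' K s) (hs : Convex ℝ s) (hK : 0 ≤ K) (hIs : ∀ n ∈ I, (n : ℝ) ∈ s)
    (hI : ∀ n ∈ I, 6 * |n| < M) (hg : ∀ n ∈ I, 6 * |⌊f n⌋| < M) :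
    IsTransverse (graphChar M fun n ↦ ⌊f n⌋) I (3 * K + 3) := by
  intro T hT r d hr hrd h_diam t ht h_sep h_ne
  rw [Fintype.mem_piFinset] at ht
  have h_mem i : t i ∈ I := by
    have := ht i
    fin_cases i <;> first | exact this | exact hT this
  have h_near {i j} (hi : t i ∈ T) (hj : t j ∈ T) : |(t i : ℝ) - t j| ≤ r :=
    (dist_le_diam_of_mem_finset hi hj).trans h_diam
  obtain ⟨h_sum, h_sum_floor⟩ := signedSum_eq_zero_of_sum_sixProd_graphChar_ne_zero hI hg h_mem h_ne
  have h_defect : |signedSum fun i ↦ f (t i)| ≤ 3 := by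
    simpa only [h_sum_floor, Int.cast_zero, sub_zero] using
      abs_signedSum_sub_signedSum_floor_le fun i ↦ f (t i)
  have h_sum_real : (signedSum fun i ↦ (t i : ℝ)) = 0 := by
    rw [← intCast_signedSum, h_sum, Int.cast_zero]
  have : d * |(t 0 : ℝ) - t 3| ≤ |signedSum fun i ↦ f (t i)| + 3 * K * r ^ 2 :=
    h.mul_abs_sub_le_of_signedSum_eq_zero hs hK (fun i ↦ hIs _ (h_mem i)) hrd
      (h_near (ht 2) (ht 1)) (h_near (ht 4) (ht 1)) (h_near (ht 5) (ht 1)) (h_near (ht 5) (ht 2))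
      (h_sep _ (ht 1)).1 (h_sep _ (ht 1)).2 h_sum_real
  rw [Int.dist_eq, le_div_iff₀' (by linarith)]
  linarith [one_le_pow₀ hr (n := 2)]

end Characters

section Counting

variable {f : ℝ → ℝ} {C : ℝ} {I : Finset ℤ}

/-- The sextuples in `I` solving `t₀ + t₁ + t₂ = t₃ + t₄ + t₅` and, up to an error `C`, the same
equation for the values of `f`. -/
def nearSolutions (f : ℝ → ℝ) (C : ℝ) (I : Finset ℤ) : Finset (Fin 6 → ℤ) :=
  {t ∈ Fintype.piFinset fun _ ↦ I | signedSum t = 0 ∧ |signedSum fun i ↦ f (t i)| ≤ C}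

lemma mem_nearSolutions_pow_div {k : ℕ} {D : ℝ} (hD : 0 < D) {t : Fin 6 → ℤ} :
    t ∈ nearSolutions (fun x ↦ x ^ k / D) C I ↔
      (∀ i, t i ∈ I) ∧ t 0 + t 1 + t 2 = t 3 + t 4 + t 5 ∧
        ((|t 0 ^ k + t 1 ^ k + t 2 ^ k - t 3 ^ k - t 4 ^ k - t 5 ^ k| : ℤ) : ℝ) ≤ C * D := by
  have h_sum : signedSum t = 0 ↔ t 0 + t 1 + t 2 = t 3 + t 4 + t 5 := by
    grind [signedSum]
  have h_pow : |signedSum fun i ↦ (t i : ℝ) ^ k / D| =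
      ((|t 0 ^ k + t 1 ^ k + t 2 ^ k - t 3 ^ k - t 4 ^ k - t 5 ^ k| : ℤ) : ℝ) / D := by
    simp only [signedSum, ← add_div, ← sub_div, abs_div, abs_of_pos hD]
    push_cast
    rfl
  rw [nearSolutions, mem_filter, Fintype.mem_piFinset, h_sum, h_pow, div_le_iff₀ hD]

lemma abs_signedSum_floor_le_of_mem_nearSolutions {t : Fin 6 → ℤ}
    (ht : t ∈ nearSolutions f C I) : |signedSum fun i ↦ ⌊f (t i)⌋| ≤ ⌈C⌉₊ + 3 := by
  have h_near : |signedSum fun i ↦ f (t i)| ≤ C := (mem_filter.1 ht).2.2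
  have h_floor := abs_signedSum_sub_signedSum_floor_le fun i ↦ f (t i)
  have h_real : |((signedSum fun i ↦ ⌊f (t i)⌋ : ℤ) : ℝ)| ≤ ⌈C⌉₊ + 3 := by
    rw [abs_le] at *
    constructor <;> linarith [Nat.le_ceil C]
  exact_mod_cast h_real

lemma card_nearSolutions_mul_card_le {M : ℕ} [NeZero M] (hI : ∀ n ∈ I, 6 * |n| < M)
    (hf : ∀ n ∈ I, 6 * |⌊f n⌋| + (⌈C⌉₊ + 3) < M) :
    (#(nearSolutions f C I) : ℝ) * Fintype.card (ZMod M × ZMod M) ≤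
      (2 * ⌈C⌉₊ + 7) * sixthMoment (graphChar M fun n ↦ ⌊f n⌋) I := by
  set H : ℤ := ⌈C⌉₊ + 3
  have h_maps : (nearSolutions f C I : Set (Fin 6 → ℤ)).MapsTo
      (fun t ↦ signedSum fun i ↦ ⌊f (t i)⌋) (Icc (-H) H) := fun t ht ↦ by
    rw [coe_Icc, Set.mem_Icc, ← abs_le]
    exact abs_signedSum_floor_le_of_mem_nearSolutions ht
  have h_fiber (b) (hb : b ∈ Icc (-H) H) :
      (#{t ∈ nearSolutions f C I | (signedSum fun i ↦ ⌊f (t i)⌋) = b} : ℝ) *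
        Fintype.card (ZMod M × ZMod M) ≤ sixthMoment (graphChar M fun n ↦ ⌊f n⌋) I := by
    rw [mem_Icc, ← abs_le] at hb
    refine le_trans ?_ (card_filter_signedSum_eq_mul_card_le (b := b) hI fun n hn ↦ ?_)
    · rw [nearSolutions, filter_filter]
      gcongr
      tauto
    · linarith [hf n hn]
  have h_card : (#(Icc (-H) H) : ℝ) = 2 * ⌈C⌉₊ + 7 := by
    have : #(Icc (-H) H) = 2 * ⌈C⌉₊ + 7 := by
      rw [Int.card_Icc]
      omega
    exact_mod_cast this
  rw [card_eq_sum_card_fiberwise h_maps, Nat.cast_sum, sum_mul, ← h_card, ← nsmul_eq_mul]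
  exact sum_le_card_nsmul _ _ _ h_fiber

lemma IsQuadraticLike.exists_card_nearSolutions_le {K : ℝ} (hK : 0 ≤ K) (C : ℝ) {η : ℝ}
    (hη : 0 < η) :
    ∃ B > (0 : ℝ), ∀ {f f' : ℝ → ℝ} {s : Set ℝ} {I : Finset ℤ} {R : ℝ},
      IsQuadraticLike f f' K s → Convex ℝ s → (∀ n ∈ I, (n : ℝ) ∈ s) → 1 ≤ R →
        Metric.diam (I : Set ℤ) ≤ R → #(nearSolutions f C I) ≤ B * R ^ (3 + η) := by
  obtain ⟨B, hB, h_moment⟩ := exists_forall_sixthMoment_le.{0} (A := 3 * K + 3) (by linarith) hη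
  refine ⟨(2 * ⌈C⌉₊ + 7) * B, by positivity, fun {f f' s I R} hf hs hIs hR h_diam ↦ ?_⟩
  obtain ⟨M, hM, hI, hg⟩ : ∃ M : ℕ, 0 < M ∧ (∀ n ∈ I, 6 * |n| < M) ∧
      ∀ n ∈ I, 6 * |⌊f n⌋| + (⌈C⌉₊ + 3) < (M : ℤ) :=
    ((Filter.eventually_gt_atTop 0).and <| .and
      ((Finset.eventually_all I).2 fun n _ ↦
        tendsto_natCast_atTop_atTop.eventually_gt_atTop (6 * |n|))
      ((Finset.eventually_all I).2 fun n _ ↦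
        tendsto_natCast_atTop_atTop.eventually_gt_atTop _)).exists
  have : NeZero M := ⟨hM.ne'⟩
  have h_transverse : IsTransverse (graphChar M fun n ↦ ⌊f n⌋) I (3 * K + 3) :=
    isTransverse_graphChar_floor hf hs hK hIs hI fun n hn ↦ by linarith [hg n hn]
  refine le_of_mul_le_mul_right ?_ (by positivity : (0 : ℝ) < Fintype.card (ZMod M × ZMod M))
  calc (#(nearSolutions f C I) : ℝ) * Fintype.card (ZMod M × ZMod M)
      ≤ (2 * ⌈C⌉₊ + 7) * sixthMoment (graphChar M fun n ↦ ⌊f n⌋) I :=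
        card_nearSolutions_mul_card_le hI hg
    _ ≤ (2 * ⌈C⌉₊ + 7) * (B * Fintype.card (ZMod M × ZMod M) * R ^ (3 + η)) := by
        gcongr
        exact h_moment h_transverse (fun n x ↦ (norm_torusChar _ _ x).le) R hR h_diam
    _ = (2 * ⌈C⌉₊ + 7) * B * R ^ (3 + η) * Fintype.card (ZMod M × ZMod M) := by ring

end Counting

end SixthMoment

theorem diophantine_count_perturbed (k : ℕ) (hk : 2 ≤ k) (C : ℝ) (hC : 0 < C) :
    ∀ ε > (0 : ℝ), ∃ Cε > (0 : ℝ), ∀ N : ℕ, 1 ≤ N →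
      (Nat.card {t : Fin 6 → ℤ //
          (∀ i, (N : ℤ) ≤ t i ∧ t i ≤ 2 * N) ∧
          t 0 + t 1 + t 2 = t 3 + t 4 + t 5 ∧
          ((|t 0 ^ k + t 1 ^ k + t 2 ^ k - t 3 ^ k - t 4 ^ k - t 5 ^ k| : ℤ) : ℝ) ≤
            C * (N : ℝ) ^ (k - 2)} : ℝ) ≤
        Cε * (N : ℝ) ^ ((3 : ℝ) + ε) := by
  intro ε hε
  obtain ⟨j, rfl⟩ := Nat.exists_eq_add_of_le' hk
  obtain ⟨B, hB, h_bound⟩ := SixthMoment.IsQuadraticLike.exists_card_nearSolutions_le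
    (K := (j + 2) * (j + 1) * 2 ^ j) (by positivity) C hε
  refine ⟨B, hB, fun N hN ↦ ?_⟩
  have hN₀ : (0 : ℝ) < N := by exact_mod_cast hN
  set I := Finset.Icc (N : ℤ) (2 * N)
  have h_mem : ∀ n ∈ I, (n : ℝ) ∈ Set.Icc (N : ℝ) (2 * N) := fun n hn ↦ by
    rw [Set.mem_Icc]
    exact_mod_cast Finset.mem_Icc.1 hn
  have h_diam : Metric.diam (I : Set ℤ) ≤ N :=
    Metric.diam_le_of_forall_dist_le hN₀.le fun m hm n hn ↦
      (Real.dist_le_of_mem_Icc (h_mem m hm) (h_mem n hn)).trans (by linarith)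
  rw [Nat.subtype_card (SixthMoment.nearSolutions (fun x ↦ x ^ (j + 2) / N ^ j) C I) fun t ↦ by
    simp only [I, SixthMoment.mem_nearSolutions_pow_div (pow_pos hN₀ j), Finset.mem_Icc,
      Nat.add_sub_cancel]]
  exact h_bound (.pow_div_pow j hN₀) (convex_Icc _ _) h_mem (by exact_mod_cast hN) h_diam

end
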